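/- Let G be a finite simple graph such that every vertex of G belongs to some maximum independent set (i.e., V(G) = corona(G)). Then G is isomorphic to the typical KE graph for α(G) (the graph on vertex set {1,…,2α(G)} whose edges are exactly the pairs {i, i+α(G)} for i ∈ {1,…,α(G)}) if and only if Ω(G) is a maximal hke collection. -/

import Mathlib

open Finset

/-- The union of a finite collection of finite sets. -/
def famUnion (Γ : Finset (Finset ℕ)) : Finset ℕ := Γ.sup id

/-- The intersection of a finite collection of finite sets
(equal to the usual intersection when the collection is nonempty). -/
def famInter (Γ : Finset (Finset ℕ)) : Finset ℕ :=
  (Γ.sup id).filter (fun x => ∀ A ∈ Γ, x ∈ A)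

/-- `F` is a hereditary König–Egerváry (hke) collection with `α(F) = α`:
`α` is a positive integer and `|⋃Γ| + |⋂Γ| = 2α` for every nonempty subcollection `Γ` of `F`. -/
def IsHKE (F : Finset (Finset ℕ)) (α : ℕ) : Prop :=
  0 < α ∧ ∀ Γ ⊆ F, Γ.Nonempty → (famUnion Γ).card + (famInter Γ).card = 2 * α

/-- `F` is a maximal hke collection: it is an hke collection and no collection
properly containing it is an hke collection. -/
def IsMaxHKE (F : Finset (Finset ℕ)) : Prop :=
  (∃ α, IsHKE F α) ∧ ∀ F' : Finset (Finset ℕ), F ⊂ F' → ¬ ∃ β, IsHKE F' β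

/-- A finset `S` is independent in the graph `G` if no two of its vertices are adjacent. -/
def IsIndepFinset (G : SimpleGraph ℕ) (S : Finset ℕ) : Prop :=
  ∀ x ∈ S, ∀ y ∈ S, ¬ G.Adj x y

open Classical in
/-- The independence number of the finite graph with vertex set `V` and adjacency `G`. -/
noncomputable def indepNum (G : SimpleGraph ℕ) (V : Finset ℕ) : ℕ :=
  (V.powerset.filter (fun S => IsIndepFinset G S)).sup Finset.card

open Classical in
/-- `Ω(G)`: the collection of all maximum independent sets of the finite graph with
vertex set `V` and adjacency `G`. -/
noncomputable def omegaColl (G : SimpleGraph ℕ) (V : Finset ℕ) : Finset (Finset ℕ) :=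
  V.powerset.filter (fun S => IsIndepFinset G S ∧ S.card = indepNum G V)

lemma mem_famUnion {Γ : Finset (Finset ℕ)} {x : ℕ} : x ∈ famUnion Γ ↔ ∃ A ∈ Γ, x ∈ A := by
  simp [famUnion, Finset.mem_sup]

lemma mem_famInter {Γ : Finset (Finset ℕ)} (h : Γ.Nonempty) {x : ℕ} :
    x ∈ famInter Γ ↔ ∀ A ∈ Γ, x ∈ A := by
  obtain ⟨B, hB⟩ := h
  unfold famInter
  rw [Finset.mem_filter]
  constructor
  · exact fun h => h.2
  · intro h
    exact ⟨mem_famUnion.2 ⟨B, hB, h B hB⟩, h⟩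

def IsInvol (p : ℕ → ℕ) (W : Finset ℕ) : Prop :=
  ∀ x ∈ W, p x ∈ W ∧ p (p x) = x ∧ p x ≠ x

def transv (p : ℕ → ℕ) (W : Finset ℕ) : Finset (Finset ℕ) :=
  W.powerset.filter (fun A => ∀ x ∈ W, x ∈ A ↔ p x ∉ A)

lemma mem_transv {p : ℕ → ℕ} {W A : Finset ℕ} :
    A ∈ transv p W ↔ A ⊆ W ∧ ∀ x ∈ W, x ∈ A ↔ p x ∉ A := by
  simp [transv]

lemma transv_hke {p : ℕ → ℕ} {W : Finset ℕ} (hp : IsInvol p W) {Γ : Finset (Finset ℕ)}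
    (hΓ : Γ ⊆ transv p W) (hn : Γ.Nonempty) :
    (famUnion Γ).card + (famInter Γ).card = W.card := by
  have hU : famUnion Γ ⊆ W := by
    intro x hx
    obtain ⟨A, hA, hx⟩ := mem_famUnion.1 hx
    exact (mem_transv.1 (hΓ hA)).1 hx
  have hI : (famInter Γ).card = (W \ famUnion Γ).card := by
    have key : ∀ x ∈ W, (x ∈ famInter Γ ↔ p x ∉ famUnion Γ) := by
      intro x hx
      rw [mem_famInter hn, mem_famUnion]
      push Not
      exact forall₂_congr fun A hA => (mem_transv.1 (hΓ hA)).2 x hx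
    have hIW : famInter Γ ⊆ W := by
      intro x hx
      exact hU (Finset.mem_filter.1 hx).1
    apply Finset.card_nbij' p p
    · intro x hx
      have hxW := hIW hx
      simp only [Finset.coe_sdiff, Set.mem_sdiff, Finset.mem_coe]
      exact ⟨(hp x hxW).1, (key x hxW).1 hx⟩
    · intro x hx
      simp only [Finset.coe_sdiff, Set.mem_sdiff, Finset.mem_coe] at hx ⊢
      rw [key _ (hp x hx.1).1, (hp x hx.1).2.1]
      exact hx.2
    · intro x hx
      exact (hp x (hIW hx)).2.1
    · intro x hx
      simp only [Finset.coe_sdiff, Set.mem_sdiff, Finset.mem_coe] at hx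
      exact (hp x hx.1).2.1
  rw [hI, Finset.card_sdiff_of_subset hU]
  have := Finset.card_le_card hU
  omega

lemma transv_card {p : ℕ → ℕ} {W : Finset ℕ} (hp : IsInvol p W) {A : Finset ℕ}
    (hA : A ∈ transv p W) : 2 * A.card = W.card := by
  have := transv_hke hp (Finset.singleton_subset_iff.2 hA) (Finset.singleton_nonempty A)
  have h1 : famUnion {A} = A := by ext; simp [mem_famUnion]
  have h2 : famInter {A} = A := by ext; simp [mem_famInter]
  rw [h1, h2] at this
  omega

lemma transv_flip {p : ℕ → ℕ} {W : Finset ℕ} (hp : IsInvol p W) {A : Finset ℕ}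
    (hA : A ∈ transv p W) {x : ℕ} (hx : x ∈ W) : insert x (A.erase (p x)) ∈ transv p W := by
  rw [mem_transv] at hA ⊢
  obtain ⟨h1, h2⟩ := hA
  refine ⟨?_, ?_⟩
  · intro z hz
    simp only [Finset.mem_insert, Finset.mem_erase] at hz
    rcases hz with rfl | hz
    · exact hx
    · exact h1 hz.2
  · intro z hz
    have a1 := hp x hx
    have a2 := hp z hz
    have a3 := h2 z hz
    simp only [Finset.mem_insert, Finset.mem_erase]
    by_cases e1 : z = x
    · subst e1; simp [a1.2.2]
    · by_cases e2 : z = p x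
      · subst e2; simp [a1.2.1, a1.2.2]
      · have e3 : p z ≠ x := fun h => e2 (by rw [← h, a2.2.1])
        have e4 : p z ≠ p x := fun h => e1 (by rw [← a2.2.1, h, a1.2.1])
        simp [e1, e2, e3, e4, a3]

lemma transv_ex {p : ℕ → ℕ} {W : Finset ℕ} (hp : IsInvol p W) {x y : ℕ} (hx : x ∈ W)
    (hy : y ∈ W) (hxy : y ≠ p x) : ∃ A ∈ transv p W, x ∈ A ∧ y ∈ A := by
  have h0 : W.filter (fun z => z < p z) ∈ transv p W := by
    rw [mem_transv]
    refine ⟨Finset.filter_subset _ _, fun z hz => ?_⟩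
    have := hp z hz
    simp only [Finset.mem_filter, hz, this.1, this.2.1, true_and]
    have := this.2.2
    omega
  refine ⟨_, transv_flip hp (transv_flip hp h0 hx) hy, ?_, ?_⟩
  · have : x ≠ p y := fun h => hxy (by rw [h, (hp y hy).2.1])
    simp [this]
  · simp

lemma transv_max {p : ℕ → ℕ} {W : Finset ℕ} (hp : IsInvol p W) (hW : W.Nonempty) :
    IsMaxHKE (transv p W) := by
  have hself : ∀ x ∈ W, ∃ A ∈ transv p W, x ∈ A := by
    intro x hx
    obtain ⟨A, hA, h, _⟩ := transv_ex hp hx hx (hp x hx).2.2.symm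
    exact ⟨A, hA, h⟩
  obtain ⟨w, hw⟩ := hW
  obtain ⟨B, hB, hwB⟩ := hself w hw
  have hBc := transv_card hp hB
  have hBpos : 0 < B.card := Finset.card_pos.2 ⟨w, hwB⟩
  refine ⟨⟨B.card, hBpos, fun Γ hΓ hn => ?_⟩, ?_⟩
  · rw [transv_hke hp hΓ hn, hBc]
  rintro F' hF ⟨β, -, hβ⟩
  obtain ⟨hsub, hne⟩ := Finset.ssubset_iff_subset_ne.1 hF
  obtain ⟨A, hAF, hA⟩ := Finset.exists_of_ssubset hF
  have hβW : 2 * β = W.card := by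
    have h1 := hβ {B} (Finset.singleton_subset_iff.2 (hsub hB)) (Finset.singleton_nonempty _)
    have h2 := transv_hke hp (Finset.singleton_subset_iff.2 hB) (Finset.singleton_nonempty _)
    omega
  rw [hβW] at hβ
  by_cases hAW : A ⊆ W
  swap
  · obtain ⟨z, hzA, hzW⟩ := Finset.not_subset.1 hAW
    have h := hβ (insert A (transv p W)) (Finset.insert_subset hAF hsub) (Finset.insert_nonempty _ _)
    have h2 : insert z W ⊆ famUnion (insert A (transv p W)) := by
      intro y hy
      rw [mem_famUnion]
      rcases Finset.mem_insert.1 hy with rfl | hy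
      · exact ⟨A, Finset.mem_insert_self _ _, hzA⟩
      · obtain ⟨C, hC, hyC⟩ := hself y hy
        exact ⟨C, Finset.mem_insert_of_mem hC, hyC⟩
    have h3 := Finset.card_le_card h2
    rw [Finset.card_insert_of_notMem hzW] at h3
    omega
  have : ∃ x ∈ W, ¬ (x ∈ A ↔ p x ∉ A) := by
    by_contra hc
    push Not at hc
    exact hA (mem_transv.2 ⟨hAW, hc⟩)
  obtain ⟨x, hx, hxA⟩ := this
  have h := hβ (insert A ((transv p W).filter (fun C => x ∈ C)))
    (Finset.insert_subset hAF ((Finset.filter_subset _ _).trans hsub)) (Finset.insert_nonempty _ _)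
  by_cases hxA1 : x ∈ A
  · have hpx : p x ∈ A := by tauto
    have h2 : W ⊆ famUnion (insert A ((transv p W).filter (fun C => x ∈ C))) := by
      intro y hy
      rw [mem_famUnion]
      by_cases e : y = p x
      · exact ⟨A, Finset.mem_insert_self _ _, e ▸ hpx⟩
      · obtain ⟨C, hC, hxC, hyC⟩ := transv_ex hp hx hy e
        exact ⟨C, Finset.mem_insert_of_mem (Finset.mem_filter.2 ⟨hC, hxC⟩), hyC⟩
    have h3 := Finset.card_le_card h2
    have h4 : x ∈ famInter (insert A ((transv p W).filter (fun C => x ∈ C))) := by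
      rw [mem_famInter (Finset.insert_nonempty _ _)]
      intro C hC
      rcases Finset.mem_insert.1 hC with rfl | hC
      · exact hxA1
      · exact (Finset.mem_filter.1 hC).2
    have h5 := Finset.card_pos.2 ⟨x, h4⟩
    omega
  · have hpx : p x ∉ A := by tauto
    have h2 : famUnion (insert A ((transv p W).filter (fun C => x ∈ C))) ⊆ W.erase (p x) := by
      intro y hy
      obtain ⟨C, hC, hyC⟩ := mem_famUnion.1 hy
      rw [Finset.mem_erase]
      rcases Finset.mem_insert.1 hC with rfl | hC
      · exact ⟨fun e => hpx (e ▸ hyC), hAW hyC⟩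
      · obtain ⟨hC, hxC⟩ := Finset.mem_filter.1 hC
        have hC := mem_transv.1 hC
        exact ⟨fun e => (hC.2 x hx).1 hxC (e ▸ hyC), hC.1 hyC⟩
    have h3 := Finset.card_le_card h2
    rw [Finset.card_erase_of_mem (hp x hx).1] at h3
    have h4 : famInter (insert A ((transv p W).filter (fun C => x ∈ C))) = ∅ := by
      rw [Finset.eq_empty_iff_forall_notMem]
      intro z hz
      rw [mem_famInter (Finset.insert_nonempty _ _)] at hz
      have hzA := hz A (Finset.mem_insert_self _ _)
      have hzW := hAW hzA
      have hzx : p z ≠ p x := fun e => hxA1 (by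
        rw [← (hp x hx).2.1, ← e, (hp z hzW).2.1]; exact hzA)
      obtain ⟨C, hC, hxC, hpC⟩ := transv_ex hp hx (hp z hzW).1 hzx
      have := hz C (Finset.mem_insert_of_mem (Finset.mem_filter.2 ⟨hC, hxC⟩))
      exact ((mem_transv.1 hC).2 z hzW).1 this hpC
    rw [h4, Finset.card_empty] at h
    have : 0 < W.card := Finset.card_pos.2 ⟨w, hw⟩
    omega

lemma fiber_card {ι : Type} [DecidableEq ι] (W : Finset ℕ) (F : Finset ι) (s t : ℕ → Finset ι)
    (hs : ∀ x, s x ⊆ F) (ht : ∀ x, t x ⊆ F)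
    (h : ∀ Γ ⊆ F, (W.filter (fun x => Γ ⊆ s x)).card = (W.filter (fun x => Γ ⊆ t x)).card) :
    ∀ n, ∀ T ⊆ F, F.card - T.card = n →
      (W.filter (fun x => s x = T)).card = (W.filter (fun x => t x = T)).card := by
  intro n
  induction n using Nat.strong_induction_on with
  | _ n ih =>
    intro T hT hn
    have expand : ∀ u : ℕ → Finset ι, (∀ x, u x ⊆ F) →
        (W.filter (fun x => T ⊆ u x)).card = (W.filter (fun x => u x = T)).card +
          ∑ T' ∈ F.powerset.filter (fun T' => T ⊂ T'), (W.filter (fun x => u x = T')).card := by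
      intro u hu
      have h1 : W.filter (fun x => T ⊆ u x) =
          W.filter (fun x => u x = T) ∪ W.filter (fun x => T ⊂ u x) := by
        ext x
        simp only [Finset.mem_filter, Finset.mem_union]
        constructor
        · rintro ⟨a, b⟩
          rcases b.eq_or_ssubset with e | e
          · exact Or.inl ⟨a, e.symm⟩
          · exact Or.inr ⟨a, e⟩
        · rintro (⟨a, b⟩ | ⟨a, b⟩)
          · exact ⟨a, b ▸ Finset.Subset.refl _⟩
          · exact ⟨a, b.1⟩
      have h2 : Disjoint (W.filter (fun x => u x = T)) (W.filter (fun x => T ⊂ u x)) := by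
        rw [Finset.disjoint_filter]
        intro x _ e hs
        rw [e] at hs
        exact (lt_irrefl T) hs
      rw [h1, Finset.card_union_of_disjoint h2]
      congr 1
      rw [Finset.card_eq_sum_card_fiberwise (f := u)
        (t := F.powerset.filter (fun T' => T ⊂ T'))]
      · apply Finset.sum_congr rfl
        intro T' hT'
        congr 1
        ext x
        simp only [Finset.mem_filter, Finset.mem_powerset] at hT' ⊢
        constructor
        · rintro ⟨⟨a, b⟩, c⟩; exact ⟨a, c⟩
        · rintro ⟨a, c⟩; exact ⟨⟨a, c ▸ hT'.2⟩, c⟩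
      · intro x hx
        simp only [Finset.coe_filter, Set.mem_ofPred_eq, Finset.mem_powerset] at hx ⊢
        exact ⟨hu x, hx.2⟩
    have e1 := expand s hs
    have e2 := expand t ht
    have e3 : ∑ T' ∈ F.powerset.filter (fun T' => T ⊂ T'), (W.filter (fun x => s x = T')).card =
        ∑ T' ∈ F.powerset.filter (fun T' => T ⊂ T'), (W.filter (fun x => t x = T')).card := by
      apply Finset.sum_congr rfl
      intro T' hT'
      simp only [Finset.mem_filter, Finset.mem_powerset] at hT'
      have c1 := Finset.card_lt_card hT'.2
      have c2 := Finset.card_le_card hT'.1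
      exact ih _ (by omega) T' hT'.1 rfl
    have := h T hT
    omega

lemma hke_embed {F : Finset (Finset ℕ)} {α : ℕ} (hF : IsHKE F α) (hn : F.Nonempty) :
    ∃ (W : Finset ℕ) (p : ℕ → ℕ), IsInvol p W ∧ F ⊆ transv p W ∧ W.Nonempty := by
  classical
  obtain ⟨A₀, hA₀⟩ := hn
  have hU := hF.2 F (Finset.Subset.refl _) ⟨A₀, hA₀⟩
  obtain ⟨W, hW, hWc⟩ := Infinite.exists_superset_card_eq (famUnion F) (2 * α) (by omega)
  have hAW : ∀ A ∈ F, A ⊆ W := fun A hA x hx => hW (mem_famUnion.2 ⟨A, hA, hx⟩)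
  set t : ℕ → Finset (Finset ℕ) := fun x => F.filter (fun A => x ∈ A) with ht
  set s : ℕ → Finset (Finset ℕ) := fun x => F.filter (fun A => x ∉ A) with hs
  have hfib : ∀ T, (W.filter (fun x => t x = T)).card = (W.filter (fun x => s x = T)).card := by
    intro T
    by_cases hT : T ⊆ F
    · refine fiber_card W F t s (fun x => Finset.filter_subset _ _)
        (fun x => Finset.filter_subset _ _) ?_ _ T hT rfl
      intro Γ hΓ
      rcases Γ.eq_empty_or_nonempty with rfl | hne
      · simp
      have h1 := hF.2 Γ hΓ hne
      have hUW : famUnion Γ ⊆ W := by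
        intro x hx
        obtain ⟨A, hA, hx⟩ := mem_famUnion.1 hx
        exact hAW A (hΓ hA) hx
      have h2 : W.filter (fun x => Γ ⊆ t x) = famInter Γ := by
        ext x
        rw [mem_famInter hne, Finset.mem_filter]
        constructor
        · rintro ⟨_, b⟩ A hA
          exact (Finset.mem_filter.1 (b hA)).2
        · intro h
          obtain ⟨B, hB⟩ := hne
          exact ⟨hAW B (hΓ hB) (h B hB), fun A hA => Finset.mem_filter.2 ⟨hΓ hA, h A hA⟩⟩
      have h3 : W.filter (fun x => Γ ⊆ s x) = W \ famUnion Γ := by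
        ext x
        rw [Finset.mem_sdiff, mem_famUnion, Finset.mem_filter]
        constructor
        · rintro ⟨a, b⟩
          refine ⟨a, ?_⟩
          rintro ⟨A, hA, hx⟩
          exact (Finset.mem_filter.1 (b hA)).2 hx
        · rintro ⟨a, b⟩
          exact ⟨a, fun A hA => Finset.mem_filter.2 ⟨hΓ hA, fun h => b ⟨A, hA, h⟩⟩⟩
      rw [h2, h3, Finset.card_sdiff_of_subset hUW]
      omega
    · rw [Finset.filter_false_of_mem, Finset.filter_false_of_mem]
      · rintro x - rfl
        exact hT (Finset.filter_subset _ _)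
      · rintro x - rfl
        exact hT (Finset.filter_subset _ _)
  have hmt : ∀ x, ∀ A ∈ F, (A ∈ t x ↔ x ∈ A) := fun x A hA => by simp [ht, hA]
  have hms : ∀ x, ∀ A ∈ F, (A ∈ s x ↔ x ∉ A) := fun x A hA => by simp [hs, hA]
  have hfib2 : ∀ T, Nonempty ({a : {x // x ∈ A₀} // t a.1 = T} ≃ {b : {x // x ∈ W \ A₀} // s b.1 = T}) := by
    intro T
    rw [← Fintype.card_eq]
    by_cases hT : A₀ ∈ T
    · have h1 : Fintype.card {a : {x // x ∈ A₀} // t a.1 = T} = (W.filter (fun x => t x = T)).card := by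
        rw [← Fintype.card_coe]
        refine Fintype.card_congr ⟨fun a => ⟨a.1.1, Finset.mem_filter.2 ⟨hAW _ hA₀ a.1.2, a.2⟩⟩,
          fun b => ⟨⟨b.1, ?_⟩, (Finset.mem_filter.1 b.2).2⟩, fun a => rfl, fun b => rfl⟩
        rw [← hmt _ _ hA₀, (Finset.mem_filter.1 b.2).2]; exact hT
      have h2 : Fintype.card {b : {x // x ∈ W \ A₀} // s b.1 = T} = (W.filter (fun x => s x = T)).card := by
        rw [← Fintype.card_coe]
        refine Fintype.card_congr ⟨fun a => ⟨a.1.1, Finset.mem_filter.2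
          ⟨(Finset.mem_sdiff.1 a.1.2).1, a.2⟩⟩,
          fun b => ⟨⟨b.1, Finset.mem_sdiff.2 ⟨(Finset.mem_filter.1 b.2).1, ?_⟩⟩,
            (Finset.mem_filter.1 b.2).2⟩, fun a => rfl, fun b => rfl⟩
        rw [← hms _ _ hA₀, (Finset.mem_filter.1 b.2).2]; exact hT
      rw [h1, h2, hfib]
    · have h1 : IsEmpty {a : {x // x ∈ A₀} // t a.1 = T} := by
        refine ⟨fun a => hT ?_⟩
        rw [← a.2, hmt _ _ hA₀]; exact a.1.2
      have h2 : IsEmpty {b : {x // x ∈ W \ A₀} // s b.1 = T} := by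
        refine ⟨fun a => hT ?_⟩
        rw [← a.2, hms _ _ hA₀]; exact (Finset.mem_sdiff.1 a.1.2).2
      rw [Fintype.card_eq_zero, Fintype.card_eq_zero]
  let e : {x // x ∈ A₀} ≃ {x // x ∈ W \ A₀} :=
    Equiv.ofFiberEquiv (f := fun a : {x // x ∈ A₀} => t a.1) (g := fun b : {x // x ∈ W \ A₀} => s b.1) (fun T => (hfib2 T).some)
  have he : ∀ a, s (e a).1 = t a.1 := fun a =>
    Equiv.ofFiberEquiv_map (f := fun a : {x // x ∈ A₀} => t a.1) (g := fun b : {x // x ∈ W \ A₀} => s b.1) (fun T => (hfib2 T).some) a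
  have heA : ∀ a, ∀ A ∈ F, (a.1 ∈ A ↔ (e a).1 ∉ A) := by
    intro a A hA
    rw [← hmt _ _ hA, ← hms _ _ hA, he]
  let p : ℕ → ℕ := fun x => if h : x ∈ A₀ then (e ⟨x, h⟩).1 else
    if h' : x ∈ W \ A₀ then (e.symm ⟨x, h'⟩).1 else x
  have p1 : ∀ a : {x // x ∈ A₀}, p a.1 = (e a).1 := fun a => by simp [p]
  have p2 : ∀ a : {x // x ∈ A₀}, p (e a).1 = a.1 := fun a => by
    have h := Finset.mem_sdiff.1 (e a).2
    simp [p, h.1, h.2]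
  have hcase : ∀ x ∈ W, ∃ a : {x // x ∈ A₀}, x = a.1 ∨ x = (e a).1 := by
    intro x hx
    by_cases h : x ∈ A₀
    · exact ⟨⟨x, h⟩, Or.inl rfl⟩
    · exact ⟨e.symm ⟨x, Finset.mem_sdiff.2 ⟨hx, h⟩⟩, Or.inr (by simp)⟩
  have hne : ∀ a : {x // x ∈ A₀}, (e a).1 ≠ a.1 := fun a h =>
    (Finset.mem_sdiff.1 (e a).2).2 (h ▸ a.2)
  refine ⟨W, p, ?_, ?_, ?_⟩
  · intro x hx
    obtain ⟨a, rfl | rfl⟩ := hcase x hx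
    · rw [p1, p2]
      exact ⟨(Finset.mem_sdiff.1 (e a).2).1, rfl, hne a⟩
    · rw [p2, p1]
      exact ⟨hAW _ hA₀ a.2, rfl, (hne a).symm⟩
  · intro A hA
    rw [mem_transv]
    refine ⟨hAW A hA, fun x hx => ?_⟩
    obtain ⟨a, rfl | rfl⟩ := hcase x hx
    · rw [p1]; exact heA a A hA
    · rw [p2, heA a A hA, not_not]
  · rw [← Finset.card_pos, hWc]
    have := hF.1
    omega

lemma mem_omega {G : SimpleGraph ℕ} {V S : Finset ℕ} :
    S ∈ omegaColl G V ↔ S ⊆ V ∧ IsIndepFinset G S ∧ S.card = indepNum G V := by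
  simp [omegaColl]

lemma le_indepNum {G : SimpleGraph ℕ} {V S : Finset ℕ} (h : S ⊆ V) (hS : IsIndepFinset G S) :
    S.card ≤ indepNum G V := by
  classical
  unfold indepNum
  apply Finset.le_sup (f := Finset.card)
  simp [h, hS]

lemma omega_eq_transv {G : SimpleGraph ℕ} {V : Finset ℕ} {p : ℕ → ℕ} (hp : IsInvol p V)
    (hc : V.card = 2 * indepNum G V)
    (hadj : ∀ x ∈ V, ∀ y ∈ V, (G.Adj x y ↔ y = p x)) : omegaColl G V = transv p V := by
  ext S
  rw [mem_omega]
  constructor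
  · rintro ⟨h1, h2, h3⟩
    have hinj : Set.InjOn p S := by
      intro x hx y hy h
      rw [← (hp x (h1 hx)).2.1, h, (hp y (h1 hy)).2.1]
    have hd : Disjoint S (S.image p) := by
      rw [Finset.disjoint_left]
      intro x hx hx'
      obtain ⟨y, hy, rfl⟩ := Finset.mem_image.1 hx'
      exact h2 y hy _ hx ((hadj _ (h1 hy) _ (h1 hx)).2 rfl)
    have hU : S ∪ S.image p = V := by
      apply Finset.eq_of_subset_of_card_le
      · apply Finset.union_subset h1
        intro x hx
        obtain ⟨y, hy, rfl⟩ := Finset.mem_image.1 hx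
        exact (hp y (h1 hy)).1
      · rw [Finset.card_union_of_disjoint hd, Finset.card_image_of_injOn hinj]
        omega
    rw [mem_transv]
    refine ⟨h1, fun x hx => ⟨fun hxS hpx => ?_, fun hpx => ?_⟩⟩
    · exact h2 x hxS _ hpx ((hadj _ hx _ (h1 hpx)).2 rfl)
    · by_contra hxS
      rw [← hU, Finset.mem_union] at hx
      obtain ⟨y, hy, rfl⟩ := Finset.mem_image.1 (hx.resolve_left hxS)
      rw [(hp y (h1 hy)).2.1] at hpx
      exact hpx hy
  · intro hS
    have hc' := transv_card hp hS
    rw [mem_transv] at hS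
    refine ⟨hS.1, fun x hx y hy h => ?_, by omega⟩
    rw [hadj x (hS.1 hx) y (hS.1 hy)] at h
    subst h
    exact (hS.2 x (hS.1 hx)).1 hx hy

lemma forward (G : SimpleGraph ℕ) (V : Finset ℕ) (hV : V.Nonempty) (f : ℕ → ℕ)
    (hf : Set.BijOn f ↑V ↑(Finset.Icc 1 (2 * indepNum G V)))
    (hadj : ∀ x ∈ V, ∀ y ∈ V,
        (G.Adj x y ↔
          ((f y = f x + indepNum G V ∧ f x ∈ Finset.Icc 1 (indepNum G V)) ∨
           (f x = f y + indepNum G V ∧ f y ∈ Finset.Icc 1 (indepNum G V))))) :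
    IsMaxHKE (omegaColl G V) := by
  set α := indepNum G V with hα
  have hc : V.card = 2 * α := by
    have := Finset.card_nbij f hf.mapsTo hf.injOn hf.surjOn
    simpa using this
  have hr : ∀ x ∈ V, 1 ≤ f x ∧ f x ≤ 2 * α := fun x hx => by
    simpa using hf.mapsTo (Finset.mem_coe.2 hx)
  have hex : ∀ x, ∃ y, x ∈ V → y ∈ V ∧ f y = if f x ≤ α then f x + α else f x - α := by
    intro x
    by_cases hx : x ∈ V
    · have := hr x hx
      obtain ⟨y, hy, e⟩ := hf.surjOn (show (if f x ≤ α then f x + α else f x - α) ∈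
        (↑(Finset.Icc 1 (2 * α)) : Set ℕ) by
          simp only [Finset.coe_Icc, Set.mem_Icc]; split_ifs <;> omega)
      exact ⟨y, fun _ => ⟨hy, e⟩⟩
    · exact ⟨0, fun h => absurd h hx⟩
  choose p hp using hex
  have hinv : IsInvol p V := by
    intro x hx
    obtain ⟨h1, h2⟩ := hp x hx
    obtain ⟨h3, h4⟩ := hp _ h1
    have := hr x hx
    refine ⟨h1, hf.injOn h3 hx ?_, fun e => ?_⟩
    · rw [h4, h2]; split_ifs <;> omega
    · rw [e] at h2; split_ifs at h2 <;> omega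
  rw [omega_eq_transv hinv hc]
  · exact transv_max hinv hV
  intro x hx y hy
  rw [hadj x hx y hy]
  have r1 := hr x hx
  have r2 := hr y hy
  have h2 := (hp x hx).2
  have : y = p x ↔ f y = f (p x) :=
    ⟨fun h => by rw [h], fun h => hf.injOn hy (hp x hx).1 h⟩
  rw [this, h2]
  simp only [Finset.mem_Icc]
  split_ifs <;> omega

lemma backward (G : SimpleGraph ℕ) (V : Finset ℕ) (hV : V.Nonempty)
    (hcorona : V = famUnion (omegaColl G V)) (hmax : IsMaxHKE (omegaColl G V)) :
    ∃ f : ℕ → ℕ,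
      Set.BijOn f ↑V ↑(Finset.Icc 1 (2 * indepNum G V)) ∧
      ∀ x ∈ V, ∀ y ∈ V,
        (G.Adj x y ↔
          ((f y = f x + indepNum G V ∧ f x ∈ Finset.Icc 1 (indepNum G V)) ∨
           (f x = f y + indepNum G V ∧ f y ∈ Finset.Icc 1 (indepNum G V)))) := by
  obtain ⟨v, hv⟩ := hV
  have hv' := hv
  rw [hcorona, mem_famUnion] at hv'
  obtain ⟨A, hA, hvA⟩ := hv'
  obtain ⟨⟨α', hke⟩, hm⟩ := hmax
  obtain ⟨W, p, hp, hsub, hWne⟩ := hke_embed hke ⟨A, hA⟩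
  have hΩ : omegaColl G V = transv p W := by
    by_contra hne
    exact hm _ (Finset.ssubset_iff_subset_ne.2 ⟨hsub, hne⟩) (transv_max hp hWne).1
  have hVW : V = W := by
    rw [hcorona, hΩ]
    ext x
    rw [mem_famUnion]
    constructor
    · rintro ⟨B, hB, hx⟩; exact (mem_transv.1 hB).1 hx
    · intro hx
      obtain ⟨B, hB, h, _⟩ := transv_ex hp hx hx (hp x hx).2.2.symm
      exact ⟨B, hB, h⟩
  subst hVW
  have hadj1 : ∀ x ∈ V, ∀ y ∈ V, G.Adj x y → y = p x := by
    intro x hx y hy h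
    by_contra hne
    obtain ⟨B, hB, h1, h2⟩ := transv_ex hp hx hy hne
    rw [← hΩ, mem_omega] at hB
    exact hB.2.1 x h1 y h2 h
  have hadj2 : ∀ x ∈ V, G.Adj x (p x) := by
    intro x hx
    by_contra hna
    obtain ⟨B, hB, h1, _⟩ := transv_ex hp hx hx (hp x hx).2.2.symm
    have hpB : p x ∉ B := ((mem_transv.1 hB).2 x hx).1 h1
    rw [← hΩ, mem_omega] at hB
    have key : ∀ z ∈ B, ¬ G.Adj z (p x) := by
      intro z hz h
      have hzV := hB.1 hz
      have := hadj1 z hzV _ (hp x hx).1 h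
      have hzx : z = x := by rw [← (hp z hzV).2.1, ← this, (hp x hx).2.1]
      exact hna (hzx ▸ h)
    have hle : (insert (p x) B).card ≤ indepNum G V := by
      apply le_indepNum (Finset.insert_subset (hp x hx).1 hB.1)
      intro a ha b hb h
      rcases Finset.mem_insert.1 ha with rfl | ha
      · rcases Finset.mem_insert.1 hb with rfl | hb
        · exact G.loopless.irrefl _ h
        · exact key b hb h.symm
      · rcases Finset.mem_insert.1 hb with rfl | hb
        · exact key a ha h
        · exact hB.2.1 a ha b hb h
    rw [Finset.card_insert_of_notMem hpB, hB.2.2] at hle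
    omega
  have hadj : ∀ x ∈ V, ∀ y ∈ V, (G.Adj x y ↔ y = p x) := fun x hx y hy =>
    ⟨hadj1 x hx y hy, fun h => h ▸ hadj2 x hx⟩
  have hAc := (mem_omega.1 hA).2.2
  rw [hΩ] at hA
  have hAT := mem_transv.1 hA
  have hVc := transv_card hp hA
  set α := indepNum G V with hα
  have : ∃ g : ℕ → ℕ, Set.InjOn g A ∧ ∀ x ∈ A, 1 ≤ g x ∧ g x ≤ α := by
    let e := A.equivFin
    refine ⟨fun x => if h : x ∈ A then (e ⟨x, h⟩).1 + 1 else 0, ?_, ?_⟩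
    · intro x hx y hy h
      have hx' : x ∈ A := hx
      have hy' : y ∈ A := hy
      simp only [hx', hy', dif_pos] at h
      have := e.injective (Fin.ext (Nat.succ_injective h))
      simpa using this
    · intro x hx
      simp only [hx, dif_pos]
      have := (e ⟨x, hx⟩).2
      omega
  obtain ⟨g, hg, hgr⟩ := this
  let f : ℕ → ℕ := fun x => if x ∈ A then g x else g (p x) + α
  have f1 : ∀ x ∈ A, f x = g x := fun x hx => by simp [f, hx]
  have f2 : ∀ x, x ∉ A → f x = g (p x) + α := fun x hx => by simp [f, hx]
  have hpA : ∀ x ∈ V, x ∉ A → p x ∈ A := fun x hx h => by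
    have := hAT.2 x hx; tauto
  have hpA' : ∀ x ∈ A, p x ∉ A := fun x h => (hAT.2 x (hAT.1 h)).1 h
  have hpp : ∀ x ∈ V, p (p x) = x := fun x hx => (hp x hx).2.1
  have hmaps : Set.MapsTo f ↑V ↑(Finset.Icc 1 (2 * α)) := by
    intro x hx
    simp only [Finset.coe_Icc, Set.mem_Icc]
    by_cases h : x ∈ A
    · rw [f1 x h]; have := hgr x h; omega
    · rw [f2 x h]; have := hgr _ (hpA x hx h); omega
  have hinj : Set.InjOn f ↑V := by
    intro x hx y hy h
    by_cases h1 : x ∈ A <;> by_cases h2 : y ∈ A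
    · rw [f1 x h1, f1 y h2] at h; exact hg h1 h2 h
    · rw [f1 x h1, f2 y h2] at h
      have := hgr x h1; have := hgr _ (hpA y hy h2); omega
    · rw [f2 x h1, f1 y h2] at h
      have := hgr y h2; have := hgr _ (hpA x hx h1); omega
    · rw [f2 x h1, f2 y h2] at h
      have := hg (hpA x hx h1) (hpA y hy h2) (by omega)
      rw [← hpp x hx, this, hpp y hy]
  refine ⟨f, ⟨hmaps, hinj, ?_⟩, ?_⟩
  · apply Finset.surjOn_of_injOn_of_card_le f hmaps hinj
    simp; omega
  · intro x hx y hy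
    rw [hadj x hx y hy]
    simp only [Finset.mem_Icc]
    by_cases h1 : x ∈ A <;> by_cases h2 : y ∈ A
    · rw [f1 x h1, f1 y h2]
      have := hgr x h1; have := hgr y h2
      constructor
      · rintro rfl; exact absurd h2 (hpA' x h1)
      · intro h; omega
    · rw [f1 x h1, f2 y h2]
      have := hgr x h1; have r := hgr _ (hpA y hy h2)
      constructor
      · rintro rfl; left; rw [hpp x hx]; omega
      · intro h
        have : p y = x := hg (hpA y hy h2) h1 (by omega)
        rw [← this, hpp y hy]
    · rw [f2 x h1, f1 y h2]
      have := hgr y h2; have r := hgr _ (hpA x hx h1)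
      constructor
      · rintro rfl; right; omega
      · intro h
        exact (hg (hpA x hx h1) h2 (by omega)).symm
    · rw [f2 x h1, f2 y h2]
      have := hgr _ (hpA x hx h1); have := hgr _ (hpA y hy h2)
      constructor
      · rintro rfl; exact absurd (hpA x hx h1) h2
      · intro h; omega

/-- let `G` be a finite simple graph (vertex set `V`, all edges inside `V`)
such that every vertex belongs to some maximum independent set (`V = corona(G)`).
Then `G` is isomorphic to the typical KE graph for `α(G)` (the graph on `{1, …, 2α(G)}`
whose edges are exactly the pairs `{i, i + α(G)}` for `i ∈ {1, …, α(G)}`)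
iff `Ω(G)` is a maximal hke collection. -/
theorem iso_typicalKEGraph_iff_omega_isMaxHKE (G : SimpleGraph ℕ) (V : Finset ℕ)
    (hV : V.Nonempty)
    (hedge : ∀ x y, G.Adj x y → x ∈ V ∧ y ∈ V)
    (hcorona : V = famUnion (omegaColl G V)) :
    (∃ f : ℕ → ℕ,
      Set.BijOn f ↑V ↑(Finset.Icc 1 (2 * indepNum G V)) ∧
      ∀ x ∈ V, ∀ y ∈ V,
        (G.Adj x y ↔
          ((f y = f x + indepNum G V ∧ f x ∈ Finset.Icc 1 (indepNum G V)) ∨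
           (f x = f y + indepNum G V ∧ f y ∈ Finset.Icc 1 (indepNum G V)))))
    ↔ IsMaxHKE (omegaColl G V) := by
  exact ⟨fun ⟨f, hf, h⟩ => forward G V hV f hf h, backward G V hV hcorona⟩
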